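/- For all integers c and t, there is at most one function a : ℕ → {0,1} with a(0) = a(1) = 0 for which there exists a sequence of integers (t_ℓ)_{ℓ∈ℕ} with t_0 = t and (ℓ+1)·t_{ℓ+1} = t_ℓ − (c − a(ℓ)) for all ℓ ∈ ℕ. That is, if a ≠ b are two such functions admitting integer sequences (t_ℓ) and (s_ℓ) satisfying the respective recurrences, then t_0 ≠ s_0. -/

import Mathlib

/-!
Unfolding `t n = d n + m n * t (n + 1)` exhibits `t 0` as a formal expansion
`d 0 + m 0 * (d 1 + m 1 * (d 2 + ⋯))` with radices `m` and digits `d`. If two expansions have the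
same value from place `n` on, then `m n` divides the difference of their digits at `n`. When the
digits at `n` are closer together than `|m n|`, they agree, and cancelling `m n` shows that the
expansions also have the same value from place `n + 1` on. In the case at hand the radices are
`n + 1` and the digits are `c - a n`, which agree at `n = 0` and differ by at most `1` after that.
-/

/-- `t` is the sequence of tails of a formal mixed-radix expansion with radices `m` and digits `d`:
the tail `t n` has leading digit `d n` and quotient `t (n + 1)`. No convergence is required. The
relation is solved for `m n * t (n + 1)` to match the recurrence
`(ℓ + 1) * t (ℓ + 1) = t ℓ - (c - a ℓ)`. -/
def IsMixedRadixExpansion {R : Type*} [Ring R] (m d t : ℕ → R) : Prop :=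
  ∀ n, m n * t (n + 1) = t n - d n

namespace IsMixedRadixExpansion

section Ring

variable {R : Type*} [Ring R] {m d e t s : ℕ → R} {n : ℕ}

theorem dvd_digit_sub_digit (ht : IsMixedRadixExpansion m d t) (hs : IsMixedRadixExpansion m e s)
    (hn : t n = s n) : m n ∣ d n - e n :=
  ⟨s (n + 1) - t (n + 1), by rw [mul_sub, ht, hs, hn, sub_sub_sub_cancel_left]⟩

theorem tail_succ_eq (ht : IsMixedRadixExpansion m d t) (hs : IsMixedRadixExpansion m e s)
    (hm : IsLeftRegular (m n)) (hn : t n = s n) (hde : d n = e n) : t (n + 1) = s (n + 1) :=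
  hm <| show m n * t (n + 1) = m n * s (n + 1) by rw [ht, hs, hn, hde]

theorem tail_eq (ht : IsMixedRadixExpansion m d t) (hs : IsMixedRadixExpansion m e s)
    (hm : ∀ n, IsLeftRegular (m n)) (hde : ∀ n, m n ∣ d n - e n → d n = e n) (h0 : t 0 = s 0)
    (n : ℕ) : t n = s n := by
  induction n with
  | zero => exact h0
  | succ n hn => exact ht.tail_succ_eq hs (hm n) hn (hde n (ht.dvd_digit_sub_digit hs hn))

theorem digits_eq (ht : IsMixedRadixExpansion m d t) (hs : IsMixedRadixExpansion m e s)
    (hm : ∀ n, IsLeftRegular (m n)) (hde : ∀ n, m n ∣ d n - e n → d n = e n) (h0 : t 0 = s 0) :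
    d = e :=
  funext fun n ↦ hde n (ht.dvd_digit_sub_digit hs (ht.tail_eq hs hm hde h0 n))

end Ring

theorem digits_eq_of_abs_sub_lt {m d e t s : ℕ → ℤ} (ht : IsMixedRadixExpansion m d t)
    (hs : IsMixedRadixExpansion m e s) (hlt : ∀ n, |d n - e n| < |m n|) (h0 : t 0 = s 0) :
    d = e := by
  have hm (n : ℕ) : IsLeftRegular (m n) :=
    IsLeftCancelMulZero.mul_left_cancel_of_ne_zero (abs_pos.mp ((abs_nonneg _).trans_lt (hlt n)))
  have hde (n : ℕ) (hdvd : m n ∣ d n - e n) : d n = e n :=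
    sub_eq_zero.mp (Int.eq_zero_of_abs_lt_dvd ((abs_dvd _ _).mpr hdvd) (hlt n))
  exact ht.digits_eq hs hm hde h0

end IsMixedRadixExpansion

theorem abs_fin_two_sub_lt_succ {a b : ℕ → Fin 2} (h0 : a 0 = b 0) (n : ℕ) :
    |((a n : ℕ) : ℤ) - ((b n : ℕ) : ℤ)| < (n : ℤ) + 1 := by
  cases n with
  | zero => simp [h0]
  | succ n => rw [abs_lt]; omega

theorem stmt2_general (m c a b t s : ℕ → ℤ) (hlt : ∀ ℓ, |a ℓ - b ℓ| < |m ℓ|)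
    (hat : ∀ ℓ, m ℓ * t (ℓ + 1) = t ℓ - (c ℓ - a ℓ))
    (hbs : ∀ ℓ, m ℓ * s (ℓ + 1) = s ℓ - (c ℓ - b ℓ)) (hab : a ≠ b) : t 0 ≠ s 0 := by
  have ht : IsMixedRadixExpansion m (c - a) t := hat
  have hs : IsMixedRadixExpansion m (c - b) s := hbs
  have hlt' (ℓ : ℕ) : |(c - a) ℓ - (c - b) ℓ| < |m ℓ| := by
    simpa [abs_sub_comm] using hlt ℓ
  exact fun h0 ↦ hab (sub_right_injective (ht.digits_eq_of_abs_sub_lt hs hlt' h0))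

/-- **Uniqueness of the 0/1 sequence admitting an integer solution of the recurrence.**
If `a ≠ b` are functions `ℕ → {0,1}` with `a 0 = a 1 = 0`, `b 0 = b 1 = 0`, and
`(t_ℓ)`, `(s_ℓ)` are integer sequences with
`(ℓ+1)·t_{ℓ+1} = t_ℓ − (c − a ℓ)` and `(ℓ+1)·s_{ℓ+1} = s_ℓ − (c − b ℓ)`,
then `t 0 ≠ s 0`. -/
theorem stmt2 (c : ℤ) (a b : ℕ → Fin 2)
    (ha0 : a 0 = 0) (ha1 : a 1 = 0) (hb0 : b 0 = 0) (hb1 : b 1 = 0)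
    (t s : ℕ → ℤ)
    (hat : ∀ ℓ : ℕ, ((ℓ : ℤ) + 1) * t (ℓ + 1) = t ℓ - (c - ((a ℓ : ℕ) : ℤ)))
    (hbs : ∀ ℓ : ℕ, ((ℓ : ℤ) + 1) * s (ℓ + 1) = s ℓ - (c - ((b ℓ : ℕ) : ℤ)))
    (hab : a ≠ b) :
    t 0 ≠ s 0 := by
  have hlt (ℓ : ℕ) := (abs_fin_two_sub_lt_succ (ha0.trans hb0.symm) ℓ).trans_le (le_abs_self _)
  exact stmt2_general _ (fun _ ↦ c) _ _ t s hlt hat hbs fun h ↦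
    hab (funext fun ℓ ↦ Fin.ext (Nat.cast_injective (congrFun h ℓ)))
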